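/- Let d, k ≥ 1 be integers. For every x, y ∈ 𝕊^k and every t ≥ 0, p_t^{rw}(x,y) − p_t^ℓ(x,y) = ∫_0^t Σ_{w ∈ 𝕊^k} p_{t−s}^ℓ(x,w) · Σ_{i ≠ j} 1{‖w_j − w_i‖ = 1} [p_s^{rw}(δ^{i,j}w, y) − p_s^{rw}(w, y)] ds − ∫_0^t Σ_{w ∈ 𝕊^k} p_{t−s}^ℓ(x,w) · Σ_{1 ≤ i < j ≤ k} 1{‖w_i − w_j‖ = 1} [p_s^{rw}(σ^{i,j}w, y) − p_s^{rw}(w, y)] ds. -/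

import Mathlib

open scoped Classical

noncomputable section

namespace SSEPPaper

/-- Configurations of `k` labelled particles on `ℤ^d`. -/
abbrev Conf (d k : ℕ) := Fin k → Fin d → ℤ

/-- Euclidean norm of an integer vector in `ℤ^d`. -/
def vnorm {d : ℕ} (v : Fin d → ℤ) : ℝ := Real.sqrt (∑ j, ((v j : ℝ)) ^ 2)

/-- Euclidean norm on `(ℝ^d)^k` of an integer configuration. -/
def cnorm {d k : ℕ} (x : Conf d k) : ℝ := Real.sqrt (∑ i, ∑ j, ((x i j : ℝ)) ^ 2)

/-- The set `𝕊^k` of configurations with pairwise distinct particle positions. -/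
def SSet (d k : ℕ) : Set (Conf d k) := {x | ∀ i j : Fin k, i ≠ j → x i ≠ x j}

/-- Swap of the coordinates `i` and `j` of a configuration, i.e. `σ^{i,j}x`. -/
def cswap {d k : ℕ} (i j : Fin k) (x : Conf d k) : Conf d k := x ∘ Equiv.swap i j

/-- `δ^{i,j}w`: the configuration which agrees with `w` except that its `j`-th coordinate
is replaced by `w i`. -/
def cdelta {d k : ℕ} (i j : Fin k) (w : Conf d k) : Conf d k := Function.update w j (w i)

/-- Kronecker delta function at `y`. -/
def deltaFn {α : Type*} (y : α) : α → ℝ := fun x => if x = y then 1 else 0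

/-- Generator of the labelled exclusion process, extended to all of `(ℤ^d)^k`. -/
def Lexc {d k : ℕ} (f : Conf d k → ℝ) : Conf d k → ℝ := fun x =>
  (∑' y : Conf d k, if cnorm (y - x) = 1 ∧ y ∈ SSet d k then f y - f x else 0) +
    ∑ i : Fin k, ∑ j : Fin k,
      if i < j ∧ vnorm (x i - x j) = 1 ∧ x ∈ SSet d k then f (cswap i j x) - f x else 0

/-- Generator of `k` independent simple random walks on `ℤ^d`. -/
def Lrw {d k : ℕ} (f : Conf d k → ℝ) : Conf d k → ℝ := fun x =>
  ∑' z : Conf d k, if cnorm (z - x) = 1 then f z - f x else 0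

/-- Generator (discrete Laplacian) of a single simple random walk on `ℤ^d`. -/
def Lap {d : ℕ} (f : (Fin d → ℤ) → ℝ) : (Fin d → ℤ) → ℝ := fun x =>
  ∑' y : Fin d → ℤ, if vnorm (y - x) = 1 then f y - f x else 0

/-- Transition probabilities `p_t^ℓ(x,y) = (e^{tL^ℓ} δ_y)(x)` of the labelled exclusion
process, given by the exponential power series of the generator. -/
def ptl {d k : ℕ} (t : ℝ) (x y : Conf d k) : ℝ :=
  ∑' n : ℕ, t ^ n / n.factorial * ((Lexc (d := d) (k := k))^[n] (deltaFn y)) x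

/-- Transition probabilities `p_t^{rw}(x,y) = (e^{tL^{rw}} δ_y)(x)` of `k` independent
simple random walks on `ℤ^d`. -/
def ptrw {d k : ℕ} (t : ℝ) (x y : Conf d k) : ℝ :=
  ∑' n : ℕ, t ^ n / n.factorial * ((Lrw (d := d) (k := k))^[n] (deltaFn y)) x

/-- Transition probabilities `p_t(x,y) = (e^{tΔ} δ_y)(x)` of a single continuous-time
simple random walk on `ℤ^d`. -/
def pt1 {d : ℕ} (t : ℝ) (x y : Fin d → ℤ) : ℝ :=
  ∑' n : ℕ, t ^ n / n.factorial * ((Lap (d := d))^[n] (deltaFn y)) x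

/-- The configuration `e₁₁ = ((1,0,…,0),(0,…,0),…,(0,…,0))`. -/
def e11 (d k : ℕ) : Conf d k := fun i j => if i.val = 0 ∧ j.val = 0 then 1 else 0

/-- The space `ℓ¹`. -/
abbrev XX (C : Type) := lp (fun _ : C => ℝ) 1

theorem memT {C : Type} (c : C → ℝ) (hc : ∀ x, |c x| ≤ 1) (π : C ≃ C) (f : XX C) :
    Memℓp (fun x => c x * f (π x) : C → ℝ) 1 := by
  apply memℓp_gen
  have h := (memℓp_gen_iff (p := 1) (by simp)).1 (lp.memℓp f)
  simp only [ENNReal.toReal_one, Real.rpow_one] at h ⊢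
  refine Summable.of_nonneg_of_le (fun _ => norm_nonneg _) (fun x => ?_) (π.summable_iff.2 h)
  simp only [norm_mul, Real.norm_eq_abs, Function.comp]
  exact mul_le_of_le_one_left (abs_nonneg _) (hc x)

/-- weighted composition operator. -/
def TT {C : Type} (c : C → ℝ) (hc : ∀ x, |c x| ≤ 1) (π : C ≃ C) : XX C →L[ℝ] XX C :=
  LinearMap.mkContinuous
    { toFun := fun f => ⟨fun x => c x * f (π x), memT c hc π f⟩
      map_add' := fun f g => by
        ext x
        exact mul_add _ _ _
      map_smul' := fun a f => by
        ext x
        simp [mul_left_comm] } 1 (fun f => by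
      have h := (memℓp_gen_iff (p := 1) (by simp)).1 (lp.memℓp f)
      have h' := (memℓp_gen_iff (p := 1) (by simp)).1 (memT c hc π f)
      rw [lp.norm_eq_tsum_rpow (by simp), lp.norm_eq_tsum_rpow (by simp)]
      simp only [ENNReal.toReal_one, Real.rpow_one, div_one, one_mul, LinearMap.coe_mk,
        AddHom.coe_mk] at h h' ⊢
      rw [← π.tsum_eq (fun x => ‖f x‖)]
      refine h'.tsum_le_tsum (fun x => ?_) (π.summable_iff.2 h)
      simp only [norm_mul, Real.norm_eq_abs]
      exact mul_le_of_le_one_left (abs_nonneg _) (hc x))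

theorem TT_apply {C : Type} (c : C → ℝ) (hc : ∀ x, |c x| ≤ 1) (π : C ≃ C) (f : XX C) (x : C) :
    TT c hc π f x = c x * f (π x) := rfl

/-- difference operator with indicator weights -/
def DD {C : Type} (P : C → Prop) (π : C ≃ C) : XX C →L[ℝ] XX C :=
  TT (fun x => if P x then 1 else 0) (fun x => by split_ifs <;> simp) π -
  TT (fun x => if P x then 1 else 0) (fun x => by split_ifs <;> simp) (Equiv.refl C)

theorem DD_apply {C : Type} (P : C → Prop) (π : C ≃ C) (f : XX C) (x : C) :
    DD P π f x = if P x then f (π x) - f x else 0 := by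
  have : DD P π f x = (if P x then 1 else 0) * f (π x) - (if P x then 1 else 0) * f x := rfl
  rw [this]
  split_ifs <;> simp

theorem sum_apply' {C ι : Type} (s : Finset ι) (F : ι → XX C →L[ℝ] XX C) (f : XX C) (x : C) :
    (∑ i ∈ s, F i) f x = ∑ i ∈ s, F i f x := by
  rw [_root_.sum_apply, lp.coeFn_sum, Finset.sum_apply]

theorem pow_apply' {C : Type} (L : (C → ℝ) → (C → ℝ)) (A : XX C →L[ℝ] XX C)
    (hA : ∀ f : XX C, ⇑(A f) = L ⇑f) (n : ℕ) (g : XX C) : ⇑((A ^ n) g) = L^[n] ⇑g := by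
  induction n with
  | zero => rfl
  | succ n ih => rw [pow_succ', Function.iterate_succ_apply', ← ih, ← hA]; rfl

theorem exp_apply' {C : Type} (L : (C → ℝ) → (C → ℝ)) (A : XX C →L[ℝ] XX C)
    (hA : ∀ f : XX C, ⇑(A f) = L ⇑f) (t : ℝ) (g : XX C) (x : C) :
    ∑' n : ℕ, t ^ n / n.factorial * (L^[n] ⇑g) x = NormedSpace.exp (t • A) g x := by
  have h := NormedSpace.exp_series_hasSum_exp' (𝕂 := ℝ) (t • A)
  have h2 := h.mapL ((lp.evalCLM ℝ (fun _ : C => ℝ) 1 x).comp (ContinuousLinearMap.apply ℝ (XX C) g))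
  refine Eq.trans ?_ h2.tsum_eq
  refine tsum_congr fun n => ?_
  rw [← pow_apply' L A hA, smul_pow, smul_smul]
  simp only [ContinuousLinearMap.comp_apply, ContinuousLinearMap.apply_apply,
    map_smul, smul_eq_mul]
  rw [div_eq_inv_mul]
  rfl

/-- point mass in ℓ¹ -/
def dl {C : Type} (y : C) : XX C := lp.single (E := fun _ : C => ℝ) 1 y (1 : ℝ)

theorem coe_dl {C : Type} (y : C) : ⇑(dl y) = deltaFn y := by
  ext x
  rw [dl, lp.single_apply, Pi.single_apply]
  unfold deltaFn
  split_ifs <;> rfl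

theorem expand {C : Type} (L : (C → ℝ) → (C → ℝ)) (A : XX C →L[ℝ] XX C)
    (hA : ∀ f : XX C, ⇑(A f) = L ⇑f) (t : ℝ) (g : XX C) (x : C) :
    ∑' w : C, (∑' n : ℕ, t ^ n / n.factorial * (L^[n] (deltaFn w)) x) * g w
      = NormedSpace.exp (t • A) g x := by
  have h := lp.hasSum_single (E := fun _ : C => ℝ) (p := 1) (by simp) g
  have h2 := h.mapL ((lp.evalCLM ℝ (fun _ : C => ℝ) 1 x).comp (NormedSpace.exp (t • A)))
  refine Eq.trans ?_ h2.tsum_eq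
  refine tsum_congr fun w => ?_
  rw [← coe_dl, exp_apply' L A hA]
  have : lp.single (E := fun _ : C => ℝ) 1 w (g w) = g w • dl w := by
    rw [dl, ← lp.single_smul]; simp
  rw [this, map_smul, smul_eq_mul, mul_comm]
  rfl

/-- Abstract Duhamel formula. -/
theorem duh {C : Type} (A B D S : XX C →L[ℝ] XX C) (h : B - A = D - S) (t : ℝ) (g : XX C) (x : C) :
    NormedSpace.exp (t • B) g x - NormedSpace.exp (t • A) g x =
    (∫ s in (0:ℝ)..t, NormedSpace.exp ((t - s) • A) (D (NormedSpace.exp (s • B) g)) x) -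
    ∫ s in (0:ℝ)..t, NormedSpace.exp ((t - s) • A) (S (NormedSpace.exp (s • B) g)) x := by
  let φ := (lp.evalCLM ℝ (fun _ : C => ℝ) 1 x).comp (ContinuousLinearMap.apply ℝ (XX C) g)
  have hcB : Continuous fun s : ℝ => NormedSpace.exp (s • B) :=
    (differentiable_exp_smul_const ℝ B).continuous
  have hcA : Continuous fun s : ℝ => NormedSpace.exp ((t - s) • A) :=
    (differentiable_exp_smul_const ℝ A).continuous.comp (continuous_const.sub continuous_id)
  have hc : ∀ E : XX C →L[ℝ] XX C, Continuous fun s : ℝ =>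
      φ (NormedSpace.exp ((t - s) • A) * (E * NormedSpace.exp (s • B))) := fun E =>
    φ.continuous.comp (hcA.mul (continuous_const.mul hcB))
  have e1 : ∀ (E : XX C →L[ℝ] XX C) (s : ℝ),
      NormedSpace.exp ((t - s) • A) (E (NormedSpace.exp (s • B) g)) x =
      φ (NormedSpace.exp ((t - s) • A) * (E * NormedSpace.exp (s • B))) := fun _ _ => rfl
  simp only [e1]
  rw [← intervalIntegral.integral_sub ((hc D).intervalIntegrable _ _) ((hc S).intervalIntegrable _ _)]
  have hd : ∀ s ∈ Set.uIcc 0 t, HasDerivAt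
      (fun s : ℝ => φ (NormedSpace.exp ((t - s) • A) * NormedSpace.exp (s • B)))
      (φ (NormedSpace.exp ((t - s) • A) * (D * NormedSpace.exp (s • B))) -
       φ (NormedSpace.exp ((t - s) • A) * (S * NormedSpace.exp (s • B)))) s := by
    intro s _
    have d1 := (hasDerivAt_exp_smul_const A (t - s)).scomp s ((hasDerivAt_id s).const_sub t)
    have d2 := hasDerivAt_exp_smul_const' B s
    have d3 := φ.hasFDerivAt.comp_hasDerivAt s (d1.mul d2)
    refine HasDerivAt.congr_deriv (f := fun s : ℝ => φ (NormedSpace.exp ((t - s) • A) * NormedSpace.exp (s • B))) d3 ?_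
    rw [← map_sub, ← mul_sub, ← sub_mul, ← h]
    congr 1
    simp only [Function.comp, id, neg_smul, one_smul]
    noncomm_ring
  rw [intervalIntegral.integral_eq_sub_of_hasDerivAt hd
    (((hc D).sub (hc S)).intervalIntegrable _ _)]
  simp only [sub_self, sub_zero, zero_smul, NormedSpace.exp_zero, one_mul, mul_one]
  rfl

theorem cnorm_eq_one {d k : ℕ} (x : Conf d k) : cnorm x = 1 ↔ ∑ i, ∑ j, (x i j) ^ 2 = 1 := by
  unfold cnorm
  rw [Real.sqrt_eq_one]
  exact_mod_cast Iff.rfl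

theorem vnorm_eq_one {d : ℕ} (x : Fin d → ℤ) : vnorm x = 1 ↔ ∑ j, (x j) ^ 2 = 1 := by
  unfold vnorm
  rw [Real.sqrt_eq_one]
  exact_mod_cast Iff.rfl

theorem fin_nbr (d k : ℕ) : {e : Conf d k | cnorm e = 1}.Finite := by
  refine (Set.finite_Icc (-1 : Conf d k) 1).subset fun e he => ?_
  rw [Set.mem_ofPred_eq, cnorm_eq_one] at he
  have h : ∀ i j, (e i j) ^ 2 ≤ 1 := fun i j => by
    rw [← he]
    refine le_trans ?_ (Finset.single_le_sum (f := fun i => ∑ j, (e i j) ^ 2)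
      (fun i _ => Finset.sum_nonneg fun j _ => sq_nonneg _) (Finset.mem_univ i))
    exact Finset.single_le_sum (f := fun j => (e i j) ^ 2) (fun j _ => sq_nonneg _)
      (Finset.mem_univ j)
  exact ⟨fun i j => (abs_le.1 ((sq_le_one_iff_abs_le_one _).1 (h i j))).1,
    fun i j => (abs_le.1 ((sq_le_one_iff_abs_le_one _).1 (h i j))).2⟩

/-- unit steps -/
def EE (d k : ℕ) : Finset (Conf d k) := (fin_nbr d k).toFinset

theorem mem_EE {d k : ℕ} (e : Conf d k) : e ∈ EE d k ↔ cnorm e = 1 := by simp [EE]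

theorem tsum_nbr {d k : ℕ} (P : Conf d k → Prop) (F : Conf d k → ℝ) (x : Conf d k) :
    (∑' z, if cnorm (z - x) = 1 ∧ P z then F z else 0) =
      ∑ e ∈ EE d k, if P (x + e) then F (x + e) else 0 := by
  rw [← (Equiv.addLeft x).tsum_eq, tsum_eq_sum (s := EE d k)]
  · refine Finset.sum_congr rfl fun e he => ?_
    rw [mem_EE] at he
    simp [he]
  · intro e he
    rw [mem_EE] at he
    simp [he]

theorem cswap_invol {d k : ℕ} (i j : Fin k) : Function.Involutive (cswap (d := d) i j) := by
  intro x
  ext a b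
  simp [cswap]

theorem cswap_mem {d k : ℕ} (i j : Fin k) {x : Conf d k} (hx : x ∈ SSet d k) :
    cswap i j x ∈ SSet d k := fun a b hab =>
  hx _ _ (fun h => hab ((Equiv.swap i j).injective h))

/-- random walk generator on ℓ¹ -/
def Bop (d k : ℕ) : XX (Conf d k) →L[ℝ] XX (Conf d k) :=
  ∑ e ∈ EE d k, DD (fun _ => True) (Equiv.addRight e)

/-- jump part of the exclusion generator on ℓ¹ -/
def Aop (d k : ℕ) : XX (Conf d k) →L[ℝ] XX (Conf d k) :=
  ∑ e ∈ EE d k, DD (fun x => x + e ∈ SSet d k) (Equiv.addRight e)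

/-- swap part of the exclusion generator on ℓ¹ -/
def Sop (d k : ℕ) : XX (Conf d k) →L[ℝ] XX (Conf d k) :=
  ∑ i : Fin k, ∑ j : Fin k, DD (fun x => i < j ∧ vnorm (x i - x j) = 1 ∧ x ∈ SSet d k)
    (cswap_invol i j).toPerm

theorem Bop_apply {d k : ℕ} (f : XX (Conf d k)) (x : Conf d k) :
    Bop d k f x = ∑ e ∈ EE d k, (f (x + e) - f x) := by
  rw [Bop, sum_apply']
  refine Finset.sum_congr rfl fun e _ => ?_
  rw [DD_apply, if_pos trivial]
  rfl

theorem Aop_apply {d k : ℕ} (f : XX (Conf d k)) (x : Conf d k) :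
    Aop d k f x = ∑ e ∈ EE d k, if x + e ∈ SSet d k then f (x + e) - f x else 0 := by
  rw [Aop, sum_apply']
  refine Finset.sum_congr rfl fun e _ => ?_
  rw [DD_apply]
  rfl

theorem Sop_apply {d k : ℕ} (f : XX (Conf d k)) (x : Conf d k) :
    Sop d k f x = ∑ i : Fin k, ∑ j : Fin k,
      if i < j ∧ vnorm (x i - x j) = 1 ∧ x ∈ SSet d k then f (cswap i j x) - f x else 0 := by
  rw [Sop, sum_apply']
  refine Finset.sum_congr rfl fun i _ => ?_
  rw [sum_apply']
  refine Finset.sum_congr rfl fun j _ => ?_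
  rw [DD_apply]
  split_ifs <;> rfl

theorem Bop_eq {d k : ℕ} (f : XX (Conf d k)) : ⇑(Bop d k f) = Lrw ⇑f := by
  ext x
  have := tsum_nbr (fun _ => True) (fun z => f z - f x) x
  simp only [and_true, if_true] at this
  rw [Bop_apply, Lrw, this]

theorem Aop_eq {d k : ℕ} (f : XX (Conf d k)) : ⇑((Aop d k + Sop d k) f) = Lexc ⇑f := by
  ext x
  have := tsum_nbr (fun z => z ∈ SSet d k) (fun z => f z - f x) x
  rw [Lexc, this, ← Aop_apply, ← Sop_apply]
  rfl

theorem Lexc_vanish {d k : ℕ} (f : Conf d k → ℝ) (hf : ∀ x ∈ SSet d k, f x = 0) :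
    ∀ x ∈ SSet d k, Lexc f x = 0 := by
  intro x hx
  unfold Lexc
  have h1 : ∀ y : Conf d k,
      (if cnorm (y - x) = 1 ∧ y ∈ SSet d k then f y - f x else 0) = 0 := fun y => by
    split_ifs with h
    · rw [hf y h.2, hf x hx, sub_zero]
    · rfl
  simp only [h1, tsum_zero, zero_add]
  refine Finset.sum_eq_zero fun i _ => Finset.sum_eq_zero fun j _ => ?_
  split_ifs
  · rw [hf _ (cswap_mem i j hx), hf x hx, sub_zero]
  · rfl

theorem ptl_zero {d k : ℕ} (t : ℝ) (x w : Conf d k) (hx : x ∈ SSet d k) (hw : w ∉ SSet d k) :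
    ptl t x w = 0 := by
  have h : ∀ n : ℕ, ∀ x ∈ SSet d k, (Lexc^[n] (deltaFn w)) x = 0 := by
    intro n
    induction n with
    | zero =>
      intro x hx
      have : x ≠ w := fun h => hw (h ▸ hx)
      simp [deltaFn, this]
    | succ n ih =>
      rw [Function.iterate_succ_apply']
      exact Lexc_vanish _ ih
  unfold ptl
  simp [h _ x hx]

theorem int_sum_one {ι : Type} [Fintype ι] (n : ι → ℤ) (hn : ∀ i, 0 ≤ n i) (h : ∑ i, n i = 1) :
    ∃ i, n i = 1 ∧ ∀ j, j ≠ i → n j = 0 := by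
  obtain ⟨i, -, hi⟩ := Finset.exists_ne_zero_of_sum_ne_zero (s := Finset.univ) (f := n)
    (by rw [h]; exact one_ne_zero)
  have h2 := Finset.add_sum_erase Finset.univ n (Finset.mem_univ i)
  have h3 : 0 ≤ ∑ j ∈ Finset.univ.erase i, n j := Finset.sum_nonneg fun j _ => hn j
  have h4 := hn i
  have h5 : ∑ j ∈ Finset.univ.erase i, n j = 0 := by omega
  refine ⟨i, by omega, fun j hj => ?_⟩
  exact (Finset.sum_eq_zero_iff_of_nonneg (fun j _ => hn j)).1 h5 j (by simp [hj])

theorem cnorm_one_struct {d k : ℕ} (e : Conf d k) (he : cnorm e = 1) :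
    ∃ i, vnorm (e i) = 1 ∧ ∀ j, j ≠ i → e j = 0 := by
  rw [cnorm_eq_one] at he
  obtain ⟨i, h1, h2⟩ := int_sum_one _ (fun i => Finset.sum_nonneg fun j _ => sq_nonneg (e i j)) he
  refine ⟨i, (vnorm_eq_one _).2 h1, fun j hj => ?_⟩
  have := (Finset.sum_eq_zero_iff_of_nonneg (fun a _ => sq_nonneg (e j a))).1 (h2 j hj)
  ext a
  simpa using this a (Finset.mem_univ a)

theorem vnorm_sub_comm {d : ℕ} (a b : Fin d → ℤ) : vnorm (a - b) = vnorm (b - a) := by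
  unfold vnorm
  congr 1
  refine Finset.sum_congr rfl fun j _ => ?_
  simp only [Pi.sub_apply]
  push_cast
  ring

theorem cnorm_cdelta {d k : ℕ} (i j : Fin k) (w : Conf d k) :
    cnorm (cdelta i j w - w) = vnorm (w j - w i) := by
  rw [vnorm_sub_comm]
  unfold cnorm vnorm
  congr 1
  rw [Finset.sum_eq_single j]
  · simp [cdelta]
  · intro b _ hb
    simp [cdelta, hb]
  · simp

theorem delta_identity {d k : ℕ} (f : Conf d k → ℝ) (w : Conf d k) (hw : w ∈ SSet d k) :
    (∑ e ∈ EE d k, (f (w + e) - f w)) -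
      (∑ e ∈ EE d k, if w + e ∈ SSet d k then f (w + e) - f w else 0) =
    ∑ i : Fin k, ∑ j : Fin k, (if i ≠ j ∧ vnorm (w j - w i) = 1 then
              f (cdelta i j w) - f w else 0) := by
  rw [← Finset.sum_sub_distrib, ← Finset.sum_product', Finset.univ_product_univ,
    ← Finset.sum_filter]
  have h1 : ∀ e ∈ EE d k, (f (w + e) - f w - if w + e ∈ SSet d k then f (w + e) - f w else 0)
      = if w + e ∉ SSet d k then f (w + e) - f w else 0 := fun e _ => by
    by_cases h : w + e ∈ SSet d k <;> simp [h]
  rw [Finset.sum_congr rfl h1, ← Finset.sum_filter]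
  symm
  have hinj : ∀ i j, w i = w j → i = j := fun i j h => by
    by_contra hij
    exact hw i j hij h
  refine Finset.sum_bij (fun p _ => cdelta p.1 p.2 w - w) ?_ ?_ ?_ ?_
  · rintro ⟨i, j⟩ hp
    simp only [Finset.mem_filter, Finset.mem_univ, true_and] at hp
    simp only [Finset.mem_filter, mem_EE, cnorm_cdelta, add_sub_cancel]
    refine ⟨hp.2, fun h => h i j hp.1 ?_⟩
    simp [cdelta, hp.1]
  · rintro ⟨i, j⟩ hp ⟨i', j'⟩ hp' heq
    simp only [Finset.mem_filter, Finset.mem_univ, true_and] at hp hp'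
    have heq' : cdelta i j w = cdelta i' j' w := sub_left_injective heq
    have hj : j = j' := by
      by_contra hne
      have := congrFun heq' j
      simp only [cdelta, Function.update_self, Function.update_of_ne hne] at this
      exact hp.1 (hinj _ _ this)
    subst hj
    have := congrFun heq' j
    simp only [cdelta, Function.update_self] at this
    rw [hinj _ _ this]
  · intro e he
    simp only [Finset.mem_filter, mem_EE] at he
    obtain ⟨he1, he2⟩ := he
    obtain ⟨j, hj1, hj2⟩ := cnorm_one_struct e he1
    have key : ∃ i, i ≠ j ∧ w i = w j + e j := by
      simp only [SSet, Set.mem_ofPred_eq, not_forall, not_not] at he2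
      obtain ⟨a, b, hab, h⟩ := he2
      simp only [Pi.add_apply] at h
      by_cases ha : a = j
      · subst ha
        rw [hj2 b (Ne.symm hab), add_zero] at h
        exact ⟨b, Ne.symm hab, h.symm⟩
      · rw [hj2 a ha, add_zero] at h
        by_cases hb : b = j
        · subst hb
          exact ⟨a, ha, h⟩
        · rw [hj2 b hb, add_zero] at h
          exact absurd (hinj _ _ h) hab
    obtain ⟨i, hij, hi⟩ := key
    refine ⟨(i, j), ?_, ?_⟩
    · simp only [Finset.mem_filter, Finset.mem_univ, true_and]
      refine ⟨hij, ?_⟩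
      rw [vnorm_sub_comm, hi, add_sub_cancel_left, hj1]
    · funext a
      by_cases ha : a = j
      · subst ha
        simp [cdelta, hi]
      · simp [cdelta, ha, hj2 a ha]
  · rintro ⟨i, j⟩ _
    simp

theorem ptrw_eq {d k : ℕ} (t : ℝ) (x y : Conf d k) : ptrw t x y =
    NormedSpace.exp (t • Bop d k) (dl y) x := by
  rw [ptrw, ← exp_apply' Lrw (Bop d k) Bop_eq, coe_dl]

theorem ptl_eq {d k : ℕ} (t : ℝ) (x y : Conf d k) : ptl t x y =
    NormedSpace.exp (t • (Aop d k + Sop d k))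
      (dl y) x := by
  rw [ptl, ← exp_apply' Lexc (Aop d k + Sop d k) Aop_eq, coe_dl]

theorem tsum_sub {d k : ℕ} (t : ℝ) (x : Conf d k) (hx : x ∈ SSet d k) (g : XX (Conf d k))
    (h : Conf d k → ℝ) (hg : ∀ w ∈ SSet d k, h w = g w) :
    ∑' w : SSet d k, ptl t x w.val * h w.val =
      NormedSpace.exp (t • (Aop d k + Sop d k)) g x := by
  rw [← expand Lexc (Aop d k + Sop d k) Aop_eq t g x]
  have h1 : ∀ w : SSet d k, ptl t x w.val * h w.val = ptl t x w.val * g w.val := fun w => by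
    rw [hg w.val w.2]
  rw [tsum_congr h1]
  refine tsum_subtype_eq_of_support_subset (f := fun w => ptl t x w * g w) fun w hw => ?_
  by_contra hws
  exact hw (by simp [ptl_zero t x w hx hws])

/-- Lemma (Duhamel-type comparison formula): for every `x, y ∈ 𝕊^k` and every `t ≥ 0`,
`p_t^{rw}(x,y) − p_t^ℓ(x,y)` equals the difference of the two time integrals involving
`δ^{i,j}` moves and `σ^{i,j}` swaps, respectively. -/
theorem duhamel_comparison (d k : ℕ) (hd : 1 ≤ d) (hk : 1 ≤ k)
    (x y : Conf d k) (hx : x ∈ SSet d k) (hy : y ∈ SSet d k) (t : ℝ) (ht : 0 ≤ t) :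
    ptrw t x y - ptl t x y =
      (∫ s in (0 : ℝ)..t, ∑' w : SSet d k, ptl (t - s) x w.val *
          ∑ i : Fin k, ∑ j : Fin k,
            (if i ≠ j ∧ vnorm (w.val j - w.val i) = 1 then
              ptrw s (cdelta i j w.val) y - ptrw s w.val y else 0))
      - ∫ s in (0 : ℝ)..t, ∑' w : SSet d k, ptl (t - s) x w.val *
          ∑ i : Fin k, ∑ j : Fin k,
            (if i < j ∧ vnorm (w.val i - w.val j) = 1 then
              ptrw s (cswap i j w.val) y - ptrw s w.val y else 0) := by
  have hdu := duh (Aop d k + Sop d k) (Bop d k) (Bop d k - Aop d k) (Sop d k) (by abel) t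
    (dl y) x
  rw [ptrw_eq, ptl_eq, hdu]
  congr 1
  · refine intervalIntegral.integral_congr fun s _ => ?_
    symm
    refine tsum_sub (t - s) x hx _ (fun w => ∑ i : Fin k, ∑ j : Fin k,
            (if i ≠ j ∧ vnorm (w j - w i) = 1 then
              ptrw s (cdelta i j w) y - ptrw s w y else 0)) fun w hw => ?_
    simp only [ptrw_eq]
    rw [← delta_identity (fun z => NormedSpace.exp (s • Bop d k)
      (dl y) z) w hw, ← Bop_apply, ← Aop_apply]
    rfl
  · refine intervalIntegral.integral_congr fun s _ => ?_
    symm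
    refine tsum_sub (t - s) x hx _ (fun w => ∑ i : Fin k, ∑ j : Fin k,
            (if i < j ∧ vnorm (w i - w j) = 1 then
              ptrw s (cswap i j w) y - ptrw s w y else 0)) fun w hw => ?_
    simp only [ptrw_eq]
    rw [Sop_apply]
    simp only [hw, and_true]

end SSEPPaper
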